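/- Suppose g : ℕ → ℂ is multiplicative and satisfies Condition (A) for some complex number κ and Condition (B). For real s ≥ 0 define P(s) = ∏_p (1 − p^{−s−1})^κ (1 + g(p)/p^{s+1} + g(p²)/p^{2(s+1)} + ⋯), with principal-branch complex powers. Then P(s) converges for every s ≥ 0 and lim_{s → 0⁺} P(s) = P(0) = ∏_p (1 − 1/p)^κ (1 + g(p)/p + g(p²)/p² + ⋯). -/

import Mathlib

open Filter Finset
open scoped ENNReal NNReal

/-- `g` is multiplicative: `g 1 = 1` and `g (m*n) = g m * g n` for coprime `m, n`. -/
def IsMult (g : ℕ → ℂ) : Prop :=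
  g 1 = 1 ∧ ∀ m n : ℕ, Nat.Coprime m n → g (m * n) = g m * g n

/-- `M_g(x) = ∑_{n ≤ x} g(n)/n`. -/
noncomputable def Mg (g : ℕ → ℂ) (x : ℝ) : ℂ :=
  ∑ n ∈ Finset.Icc 1 ⌊x⌋₊, g n / (n : ℂ)

/-- The finite set of primes `p ≤ x`. -/
noncomputable def primesLE (x : ℝ) : Finset ℕ :=
  (Finset.range (⌊x⌋₊ + 1)).filter Nat.Prime

/-- Condition (A): `∑_{p ≤ x} g(p) log p / p = κ log x + O(1)` for all `x ≥ 2`. -/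
def CondA (g : ℕ → ℂ) (κ : ℂ) : Prop :=
  ∃ C : ℝ, ∀ x : ℝ, 2 ≤ x →
    ‖(∑ p ∈ primesLE x, g p * (Real.log p : ℂ) / (p : ℂ)) - κ * (Real.log x : ℂ)‖ ≤ C

/-- Condition (B):
`∑_p (|g(p)| log p / p) ∑_{r≥1} |g(p^r)|/p^r + ∑_p ∑_{r≥2} |g(p^r)| log(p^r)/p^r < ∞`. -/
def CondB (g : ℕ → ℂ) : Prop :=
  (∑' p : Nat.Primes,
      ((‖g (p : ℕ)‖₊ : ℝ≥0∞) * ENNReal.ofReal (Real.log (p : ℕ)) / ((p : ℕ) : ℝ≥0∞)) *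
        ∑' r : ℕ, (‖g ((p : ℕ) ^ (r + 1))‖₊ : ℝ≥0∞) / (((p : ℕ) ^ (r + 1) : ℕ) : ℝ≥0∞))
    + (∑' p : Nat.Primes, ∑' r : ℕ,
        (‖g ((p : ℕ) ^ (r + 2))‖₊ : ℝ≥0∞) *
          ENNReal.ofReal (Real.log ((p : ℕ) ^ (r + 2) : ℕ)) /
          (((p : ℕ) ^ (r + 2) : ℕ) : ℝ≥0∞)) < ⊤

/-- Condition (C): `∏_{p ≤ x} (1 + |g(p)|/p) ≪ (log x)^β` for all `x ≥ 2`. -/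
def CondC (g : ℕ → ℂ) (β : ℝ) : Prop :=
  ∃ C : ℝ, ∀ x : ℝ, 2 ≤ x →
    ∏ p ∈ primesLE x, (1 + ‖g p‖ / (p : ℝ)) ≤ C * Real.log x ^ β

/-- The Euler factor `(1 - 1/p)^κ (1 + g(p)/p + g(p²)/p² + ⋯)` (principal branch power). -/
noncomputable def eulerFactor (g : ℕ → ℂ) (κ : ℂ) (p : ℕ) : ℂ :=
  (1 - 1 / (p : ℂ)) ^ κ * ∑' r : ℕ, g (p ^ r) / (p : ℂ) ^ r

/-- The Euler factor at `s`: `(1 - p^{-s-1})^κ (1 + g(p)/p^{s+1} + g(p²)/p^{2(s+1)} + ⋯)`,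
with principal-branch complex power. -/
noncomputable def eulerFactorS (g : ℕ → ℂ) (κ : ℂ) (s : ℝ) (p : ℕ) : ℂ :=
  ((1 - (((p : ℝ) ^ (-s - 1) : ℝ) : ℂ)) ^ κ) *
    ∑' r : ℕ, g (p ^ r) / (((((p : ℝ) ^ (s + 1) : ℝ)) ^ r : ℝ) : ℂ)

/-- The von Mangoldt form of Mertens' first theorem. -/
lemma mertens_vonMangoldt (N : ℕ) (hN : 1 ≤ N) :
    |(∑ d ∈ Finset.Ioc 0 N, ArithmeticFunction.vonMangoldt d / (d : ℝ)) - Real.log N| ≤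
      Real.log 4 + 5 := by
  have hN0 : (0 : ℝ) < N := by exact_mod_cast hN
  have h1 := ArithmeticFunction.sum_Ioc_mul_zeta_eq_sum ArithmeticFunction.vonMangoldt N
  rw [ArithmeticFunction.vonMangoldt_mul_zeta] at h1
  have h2 : ∑ n ∈ Finset.Ioc 0 N, ArithmeticFunction.log n = Real.log (N.factorial) := by
    clear h1 hN hN0
    induction N with
    | zero => simp
    | succ n ih =>
      rw [Finset.sum_Ioc_succ_top (Nat.zero_le n), ih, Nat.factorial_succ, Nat.cast_mul,
        Real.log_mul (by positivity) (by positivity), ArithmeticFunction.log_apply]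
      ring
  rw [h2] at h1
  have h3 := Stirling.le_log_factorial_stirling (n := N) (by omega)
  have h4 : Real.log (N.factorial) ≤ N * Real.log N := by
    rw [← Real.log_pow]
    apply Real.log_le_log (by positivity)
    exact_mod_cast Nat.factorial_le_pow N
  have h5 : Real.log (N.factorial) ≤
      N * ∑ d ∈ Finset.Ioc 0 N, ArithmeticFunction.vonMangoldt d / (d : ℝ) := by
    rw [h1, Finset.mul_sum]
    apply Finset.sum_le_sum
    intro d hd
    have : ((N / d : ℕ) : ℝ) ≤ N / d := Nat.cast_div_le
    calc _ ≤ ArithmeticFunction.vonMangoldt d * ((N : ℝ) / d) :=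
          mul_le_mul_of_nonneg_left this ArithmeticFunction.vonMangoldt_nonneg
      _ = _ := by ring
  have h6 : N * ∑ d ∈ Finset.Ioc 0 N, ArithmeticFunction.vonMangoldt d / (d : ℝ)
      ≤ Real.log (N.factorial) + Chebyshev.psi N := by
    rw [h1, Finset.mul_sum, Chebyshev.psi, Nat.floor_natCast, ← Finset.sum_add_distrib]
    apply Finset.sum_le_sum
    intro d hd
    have hd0 : 0 < d := (Finset.mem_Ioc.1 hd).1
    have : (N : ℝ) / d ≤ ((N / d : ℕ) : ℝ) + 1 := by
      rw [div_le_iff₀ (by exact_mod_cast hd0)]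
      have := Nat.lt_div_mul_add hd0 (a := N)
      have h : (N : ℝ) < ((N / d : ℕ) : ℝ) * d + d := by exact_mod_cast this
      linarith
    calc _ = ArithmeticFunction.vonMangoldt d * ((N : ℝ) / d) := by ring
      _ ≤ ArithmeticFunction.vonMangoldt d * (((N / d : ℕ) : ℝ) + 1) :=
          mul_le_mul_of_nonneg_left this ArithmeticFunction.vonMangoldt_nonneg
      _ = _ := by ring
  have h7 := Chebyshev.psi_le_const_mul_self hN0.le
  have h8 : 0 ≤ Real.log N := Real.log_nonneg (by exact_mod_cast hN)
  have h9 : 0 ≤ Real.log (2 * Real.pi) := Real.log_nonneg (by linarith [Real.pi_gt_three])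
  have h10 : 0 ≤ Real.log 4 := Real.log_nonneg (by norm_num)
  set S := ∑ d ∈ Finset.Ioc 0 N, ArithmeticFunction.vonMangoldt d / (d : ℝ)
  rw [abs_le]
  constructor
  · have : (N : ℝ) * (-(Real.log 4 + 5)) ≤ N * (S - Real.log N) := by nlinarith
    exact le_of_mul_le_mul_left this hN0
  · have : (N : ℝ) * (S - Real.log N) ≤ N * (Real.log 4 + 5) := by nlinarith
    exact le_of_mul_le_mul_left this hN0

/-- Mertens' first theorem. -/
lemma mertens_first : ∃ K : ℝ, ∀ N : ℕ, 1 ≤ N →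
    |(∑ p ∈ (Finset.range (N + 1)).filter Nat.Prime, Real.log p / (p : ℝ)) - Real.log N| ≤ K := by
  have hs := ArithmeticFunction.vonMangoldt.summable_residueClass_non_primes_div (q := 1) 0
  have hcl : ∀ n : ℕ, ArithmeticFunction.vonMangoldt.residueClass (0 : ZMod 1) n =
      ArithmeticFunction.vonMangoldt n := by
    intro n
    apply Set.indicator_of_mem
    exact Subsingleton.elim _ _
  simp only [hcl] at hs
  refine ⟨Real.log 4 + 5 +
    ∑' n : ℕ, (if n.Prime then 0 else ArithmeticFunction.vonMangoldt n) / (n : ℝ), ?_⟩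
  intro N hN
  have h0 : ∀ n : ℕ, 0 ≤ (if n.Prime then 0 else ArithmeticFunction.vonMangoldt n) / (n : ℝ) := by
    intro n
    apply div_nonneg _ (Nat.cast_nonneg n)
    split_ifs
    · exact le_rfl
    · exact ArithmeticFunction.vonMangoldt_nonneg
  have h1 := hs.sum_le_tsum (Finset.range (N + 1)) (fun n _ => h0 n)
  have h1' := Finset.sum_nonneg (s := Finset.range (N + 1)) (fun n _ => h0 n)
  have h2 := mertens_vonMangoldt N hN
  have h3 : ∑ d ∈ Finset.Ioc 0 N, ArithmeticFunction.vonMangoldt d / (d : ℝ) =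
      (∑ p ∈ (Finset.range (N + 1)).filter Nat.Prime, Real.log p / (p : ℝ)) +
      ∑ n ∈ Finset.range (N + 1),
        (if n.Prime then 0 else ArithmeticFunction.vonMangoldt n) / (n : ℝ) := by
    have : ∑ d ∈ Finset.Ioc 0 N, ArithmeticFunction.vonMangoldt d / (d : ℝ) =
        ∑ d ∈ Finset.range (N + 1), ArithmeticFunction.vonMangoldt d / (d : ℝ) := by
      apply Finset.sum_subset
      · intro d hd
        simp only [Finset.mem_Ioc, Finset.mem_range] at *
        omega
      · intro d hd hd'
        have : d = 0 := by
          simp only [Finset.mem_Ioc, Finset.mem_range] at *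
          omega
        simp [this]
    rw [this, Finset.sum_filter, ← Finset.sum_add_distrib]
    apply Finset.sum_congr rfl
    intro n _
    split_ifs with h
    · simp [ArithmeticFunction.vonMangoldt_apply_prime h]
    · simp
  rw [h3] at h2
  rw [abs_le] at h2 ⊢
  constructor <;> linarith [h2.1, h2.2]

/-- Abel summation bound. -/
lemma abel_bound (c : ℕ → ℂ) (b : ℕ → ℝ) (C : ℝ) (hC : ∀ n, ‖∑ i ∈ Finset.range n, c i‖ ≤ C)
    (hb : Antitone b) (hb0 : ∀ n, 0 ≤ b n) (m N : ℕ) (h : m ≤ N) :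
    ‖∑ i ∈ Finset.range N, c i * (b i : ℂ) - ∑ i ∈ Finset.range m, c i * (b i : ℂ)‖
      ≤ 2 * C * b m := by
  set A : ℕ → ℂ := fun n => ∑ i ∈ Finset.range n, c i with hA
  have key : ∑ i ∈ Finset.range N, c i * (b i : ℂ) - ∑ i ∈ Finset.range m, c i * (b i : ℂ) =
      (A N - A m) * (b N : ℂ) +
        ∑ i ∈ Finset.Ico m N, (A (i + 1) - A m) * ((b i - b (i + 1) : ℝ) : ℂ) := by
    induction N, h using Nat.le_induction with
    | base => simp
    | succ n hn ih =>
      rw [Finset.sum_Ico_succ_top hn, Finset.sum_range_succ, add_sub_right_comm, ih]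
      have : A (n + 1) = A n + c n := Finset.sum_range_succ _ _
      rw [this]
      push_cast
      ring
  have hAm : ∀ n, ‖A n - A m‖ ≤ 2 * C := fun n =>
    (norm_sub_le _ _).trans (by linarith [hC n, hC m])
  rw [key]
  have htel : ∑ i ∈ Finset.Ico m N, (b i - b (i + 1)) = b m - b N := by
    have := Finset.sum_Ico_sub b h
    rw [← neg_inj, ← Finset.sum_neg_distrib]
    simpa using this
  calc _ ≤ ‖(A N - A m) * (b N : ℂ)‖ +
        ∑ i ∈ Finset.Ico m N, ‖(A (i + 1) - A m) * ((b i - b (i + 1) : ℝ) : ℂ)‖ :=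
        (norm_add_le _ _).trans (by gcongr; exact norm_sum_le _ _)
    _ ≤ 2 * C * b N + ∑ i ∈ Finset.Ico m N, 2 * C * (b i - b (i + 1)) := by
        gcongr with i hi
        · rw [norm_mul, Complex.norm_real, Real.norm_of_nonneg (hb0 _)]
          exact mul_le_mul_of_nonneg_right (hAm _) (hb0 _)
        · have : 0 ≤ b i - b (i + 1) := sub_nonneg.2 (hb (Nat.le_succ i))
          rw [norm_mul, Complex.norm_real, Real.norm_of_nonneg this]
          exact mul_le_mul_of_nonneg_right (hAm _) this
    _ = _ := by rw [← Finset.mul_sum, htel]; ring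

/-- Uniform Dirichlet test. -/
lemma uniform_dirichlet (c : ℕ → ℂ) (b : ℝ → ℕ → ℝ) (C : ℝ)
    (hC : ∀ n, ‖∑ i ∈ Finset.range n, c i‖ ≤ C)
    (hb : ∀ s, 0 ≤ s → Antitone (b s)) (hb0 : ∀ s, 0 ≤ s → ∀ n, 0 ≤ b s n)
    (B : ℕ → ℝ) (hB : ∀ s, 0 ≤ s → ∀ n, b s n ≤ B n) (hB0 : Tendsto B atTop (nhds 0))
    (hcont : ∀ n, Continuous fun s => b s n) :
    ∃ H : ℝ → ℂ, ContinuousOn H (Set.Ici 0) ∧ ∀ s, 0 ≤ s →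
      Tendsto (fun N => ∑ i ∈ Finset.range N, c i * (b s i : ℂ)) atTop (nhds (H s)) := by
  have hC0 : 0 ≤ C := (norm_nonneg _).trans (hC 0)
  have hU : UniformCauchySeqOn (fun N s => ∑ i ∈ Finset.range N, c i * (b s i : ℂ)) atTop
      (Set.Ici 0) := by
    rw [Metric.uniformCauchySeqOn_iff]
    intro ε hε
    have h1 : Tendsto (fun n => 2 * C * B n) atTop (nhds 0) := by
      simpa using hB0.const_mul (2 * C)
    obtain ⟨M, hM⟩ := (h1.eventually (gt_mem_nhds hε)).exists_forall_of_atTop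
    refine ⟨M, ?_⟩
    have hmain : ∀ m ≥ M, ∀ n ≥ m, ∀ s ∈ Set.Ici (0 : ℝ),
        ‖∑ i ∈ Finset.range n, c i * (b s i : ℂ) - ∑ i ∈ Finset.range m, c i * (b s i : ℂ)‖ < ε := by
      intro m hm n hn s hs
      refine (abel_bound c (b s) C hC (hb s hs) (hb0 s hs) m n hn).trans_lt (lt_of_le_of_lt ?_ (hM m hm))
      exact mul_le_mul_of_nonneg_left (hB s hs m) (by positivity)
    intro m hm n hn s hs
    rcases le_total m n with h | h
    · rw [dist_comm, dist_eq_norm]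
      exact hmain m hm n h s hs
    · rw [dist_eq_norm]
      exact hmain n hn m h s hs
  have hex : ∀ s : ℝ, ∃ y : ℂ, 0 ≤ s →
      Tendsto (fun N => ∑ i ∈ Finset.range N, c i * (b s i : ℂ)) atTop (nhds y) := by
    intro s
    by_cases hs : 0 ≤ s
    · obtain ⟨y, hy⟩ := cauchySeq_tendsto_of_complete (hU.cauchySeq hs)
      exact ⟨y, fun _ => hy⟩
    · exact ⟨0, fun h => absurd h hs⟩
  choose H hH using hex
  refine ⟨H, ?_, hH⟩
  have := hU.tendstoUniformlyOn_of_tendsto (fun s hs => hH s hs)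
  refine this.continuousOn (Filter.Frequently.of_forall fun N => ?_)
  apply Continuous.continuousOn
  apply continuous_finsetSum
  intro i _
  exact continuous_const.mul (Complex.continuous_ofReal.comp (hcont i))

/-- Convergence of the sum of the first order terms. -/
lemma first_order_sum (g : ℕ → ℂ) (κ : ℂ) (hA : CondA g κ) :
    ∃ H : ℝ → ℂ, ContinuousOn H (Set.Ici 0) ∧ ∀ s, 0 ≤ s →
      Tendsto (fun N => ∑ p ∈ (Finset.range N).filter Nat.Prime,
        (g p - κ) * (((p : ℝ) ^ (-s - 1) : ℝ) : ℂ)) atTop (nhds (H s)) := by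
  obtain ⟨C, hC⟩ := hA
  obtain ⟨K, hK⟩ := mertens_first
  have hlog : ∀ n : ℕ, 0 < Real.log (max n 2 : ℕ) := fun n =>
    Real.log_pos (by
      have : 2 ≤ max n 2 := le_max_right _ _
      exact_mod_cast (by omega : 1 < max n 2))
  have hone : ∀ n : ℕ, (1 : ℝ) ≤ (max n 2 : ℕ) := fun n => by
      have : 2 ≤ max n 2 := le_max_right _ _
      exact_mod_cast (by omega : 1 ≤ max n 2)
  have hex : ∃ H : ℝ → ℂ, ContinuousOn H (Set.Ici 0) ∧ ∀ s, 0 ≤ s →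
      Tendsto (fun N => ∑ i ∈ Finset.range N,
        (if i.Prime then (g i - κ) * (Real.log i : ℂ) / (i : ℂ) else 0) *
          ((((max i 2 : ℕ) : ℝ) ^ (-s) / Real.log (max i 2 : ℕ) : ℝ) : ℂ)) atTop (nhds (H s)) := by
    refine uniform_dirichlet
      (fun n => if n.Prime then (g n - κ) * (Real.log n : ℂ) / (n : ℂ) else 0)
      (fun s n => ((max n 2 : ℕ) : ℝ) ^ (-s) / Real.log (max n 2 : ℕ))
      (|C| + ‖κ‖ * |K|) ?_ ?_ ?_ (fun n => 1 / Real.log (max n 2 : ℕ)) ?_ ?_ ?_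
    · intro n
      rw [← Finset.sum_filter]
      by_cases hn : n < 3
      · have : (Finset.range n).filter Nat.Prime = ∅ := by
          rw [Finset.filter_eq_empty_iff]
          intro p hp hpp
          have := hpp.two_le
          have := Finset.mem_range.1 hp
          omega
        rw [this]
        simp only [Finset.sum_empty, norm_zero]
        positivity
      · obtain ⟨m, rfl⟩ : ∃ m, n = m + 1 := ⟨n - 1, by omega⟩
        have hm : 2 ≤ m := by omega
        have h1 := hC m (by exact_mod_cast hm)
        have h2 := hK m (by omega)
        have hpl : primesLE (m : ℝ) = (Finset.range (m + 1)).filter Nat.Prime := by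
          simp [primesLE]
        rw [hpl] at h1
        have heq : ∑ p ∈ (Finset.range (m + 1)).filter Nat.Prime,
            (g p - κ) * (Real.log p : ℂ) / (p : ℂ) =
            ((∑ p ∈ (Finset.range (m + 1)).filter Nat.Prime, g p * (Real.log p : ℂ) / (p : ℂ))
              - κ * (Real.log m : ℂ)) -
            κ * (((∑ p ∈ (Finset.range (m + 1)).filter Nat.Prime, Real.log p / (p : ℝ))
              - Real.log m : ℝ) : ℂ) := by
          push_cast
          rw [mul_sub, Finset.mul_sum]
          rw [sub_sub_sub_cancel_right, ← Finset.sum_sub_distrib]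
          refine Finset.sum_congr rfl fun p _ => ?_
          ring
        rw [heq]
        refine (norm_sub_le _ _).trans (add_le_add (h1.trans (le_abs_self C)) ?_)
        rw [norm_mul, Complex.norm_real, Real.norm_eq_abs]
        exact mul_le_mul_of_nonneg_left (h2.trans (le_abs_self K)) (norm_nonneg _)
    · intro s hs m n hmn
      have h1 : ((max m 2 : ℕ) : ℝ) ≤ (max n 2 : ℕ) := by
        exact_mod_cast max_le_max_right 2 hmn
      have h0 := hone m
      apply div_le_div₀ (by positivity) _ (hlog m)
      · exact Real.log_le_log (by linarith) h1
      · exact Real.rpow_le_rpow_of_nonpos (by linarith) h1 (by linarith)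
    · intro s hs n
      have := hlog n
      positivity
    · intro s hs n
      apply div_le_div_of_nonneg_right _ (hlog n).le
      exact Real.rpow_le_one_of_one_le_of_nonpos (hone n) (by linarith)
    · have h1 : Tendsto (fun n : ℕ => Real.log (n : ℝ)) atTop atTop :=
        Real.tendsto_log_atTop.comp tendsto_natCast_atTop_atTop
      have h2 : Tendsto (fun n : ℕ => 1 / Real.log (n : ℝ)) atTop (nhds 0) := by
        simp only [one_div]
        exact h1.inv_tendsto_atTop
      refine h2.congr' ?_
      filter_upwards [eventually_ge_atTop 2] with n hn
      rw [max_eq_left hn]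
    · intro n
      have := hone n
      apply Continuous.div_const
      exact Continuous.rpow continuous_const continuous_neg (fun s => Or.inl (by positivity))
  obtain ⟨H, hH, hH'⟩ := hex
  · refine ⟨H, hH, fun s hs => ?_⟩
    refine (hH' s hs).congr fun N => ?_
    rw [Finset.sum_filter]
    refine Finset.sum_congr rfl fun p _ => ?_
    split_ifs with hp
    · have h2 : max p 2 = p := max_eq_left hp.two_le
      have hl := hlog p
      have hp0 : (0 : ℝ) < p := by exact_mod_cast hp.pos
      rw [h2] at hl ⊢
      rw [Real.rpow_sub hp0, Real.rpow_one]
      have : (Real.log p : ℂ) ≠ 0 := by exact_mod_cast hl.ne'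
      have : (p : ℂ) ≠ 0 := by exact_mod_cast hp.ne_zero
      rw [Complex.ofReal_div, Complex.ofReal_div, Complex.ofReal_natCast]
      field_simp
    · simp

/-- Consequences of condition (B). -/
lemma condB_conseq (g : ℕ → ℂ) (hB : CondB g) :
    (Summable fun p : Nat.Primes => (‖g (p : ℕ)‖ / ((p : ℕ) : ℝ)) ^ 2) ∧
    (∀ p : Nat.Primes, Summable fun r : ℕ =>
      ‖g ((p : ℕ) ^ (r + 2))‖ / (((p : ℕ) : ℝ) ^ (r + 2))) ∧
    (Summable fun p : Nat.Primes => ∑' r : ℕ,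
      ‖g ((p : ℕ) ^ (r + 2))‖ / (((p : ℕ) : ℝ) ^ (r + 2))) := by
  unfold CondB at hB
  rw [ENNReal.add_lt_top] at hB
  obtain ⟨hB1, hB2⟩ := hB
  have hl2 : (0 : ℝ) < Real.log 2 := Real.log_pos (by norm_num)
  have hl2' : ENNReal.ofReal (Real.log 2) ≠ 0 := by simpa using hl2
  have conv : ∀ (x : ℂ) (n : ℕ), n ≠ 0 →
      ((‖x‖₊ : ℝ≥0∞) / (n : ℝ≥0∞)) = ENNReal.ofReal (‖x‖ / n) := by
    intro x n hn
    rw [ENNReal.ofReal_div_of_pos (by positivity), ENNReal.ofReal_natCast, ofReal_norm]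
    rfl
  have hlog : ∀ n : ℕ, 2 ≤ n → ENNReal.ofReal (Real.log 2) ≤ ENNReal.ofReal (Real.log n) := by
    intro n hn
    apply ENNReal.ofReal_le_ofReal
    apply Real.log_le_log (by norm_num)
    exact_mod_cast hn
  have h2 : Summable fun q : Nat.Primes × ℕ =>
      ‖g ((q.1 : ℕ) ^ (q.2 + 2))‖ / (((q.1 : ℕ) : ℝ) ^ (q.2 + 2)) := by
    have hfin : ∑' q : Nat.Primes × ℕ, ENNReal.ofReal
        (‖g ((q.1 : ℕ) ^ (q.2 + 2))‖ / (((q.1 : ℕ) : ℝ) ^ (q.2 + 2))) ≠ ⊤ := by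
      rw [ENNReal.tsum_prod']
      have hle : ENNReal.ofReal (Real.log 2) * ∑' p : Nat.Primes, ∑' r : ℕ, ENNReal.ofReal
        (‖g ((p : ℕ) ^ (r + 2))‖ / (((p : ℕ) : ℝ) ^ (r + 2))) < ⊤ := by
        refine lt_of_le_of_lt ?_ hB2
        rw [← ENNReal.tsum_mul_left]
        refine ENNReal.tsum_le_tsum fun p => ?_
        rw [← ENNReal.tsum_mul_left]
        refine ENNReal.tsum_le_tsum fun r => ?_
        have hp := p.2.two_le
        have hpr : 2 ≤ (p : ℕ) ^ (r + 2) :=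
          hp.trans (Nat.le_self_pow (by omega) _)
        rw [mul_comm (‖g ((p : ℕ) ^ (r + 2))‖₊ : ℝ≥0∞), mul_div_assoc, conv _ _ (by omega)]
        push_cast
        have := hlog _ hpr
        push_cast at this
        gcongr
      intro htop
      rw [htop, ENNReal.mul_top hl2'] at hle
      exact lt_irrefl _ hle
    refine (ENNReal.summable_toReal hfin).congr fun q => ?_
    rw [ENNReal.toReal_ofReal (by positivity)]
  refine ⟨?_, fun p => h2.prod_factor p, h2.prod⟩
  have hfin : ∑' p : Nat.Primes, ENNReal.ofReal ((‖g (p : ℕ)‖ / ((p : ℕ) : ℝ)) ^ 2) ≠ ⊤ := by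
    have hle : ENNReal.ofReal (Real.log 2) *
        ∑' p : Nat.Primes, ENNReal.ofReal ((‖g (p : ℕ)‖ / ((p : ℕ) : ℝ)) ^ 2) < ⊤ := by
      refine lt_of_le_of_lt ?_ hB1
      rw [← ENNReal.tsum_mul_left]
      refine ENNReal.tsum_le_tsum fun p => ?_
      have hp := p.2.two_le
      have h0 := ENNReal.le_tsum (f := fun r : ℕ =>
        (‖g ((p : ℕ) ^ (r + 1))‖₊ : ℝ≥0∞) / (((p : ℕ) ^ (r + 1) : ℕ) : ℝ≥0∞)) 0
      simp only [zero_add, pow_one] at h0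
      refine le_trans ?_ (mul_le_mul_right h0 _)
      rw [mul_comm (‖g (p : ℕ)‖₊ : ℝ≥0∞), mul_div_assoc, conv _ _ (by omega), mul_assoc,
        ← ENNReal.ofReal_mul (p := ‖g (p : ℕ)‖ / ((p : ℕ) : ℝ)) (by positivity), ← pow_two]
      exact mul_le_mul_left (hlog _ hp) _
    intro htop
    rw [htop, ENNReal.mul_top hl2'] at hle
    exact lt_irrefl _ hle
  refine (ENNReal.summable_toReal hfin).congr fun q => ?_
  rw [ENNReal.toReal_ofReal (by positivity)]

/-- Local estimate for one Euler factor. -/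
lemma local_estimate (κ : ℂ) (M : ℝ) (z : ℝ) (w R : ℂ) (hz0 : 0 ≤ z) (hz : z ≤ 1 / 2)
    (hw : ‖w‖ ≤ M) :
    ‖Complex.exp (κ * (Complex.log (1 - (z : ℂ)) + z)) * (Complex.exp (-w) * (1 + w + R)) - 1‖ ≤
      Real.exp ‖κ‖ * (Real.exp M * (‖w‖ ^ 2 * Real.exp M + ‖R‖)) +
        z ^ 2 * (‖κ‖ * Real.exp ‖κ‖) := by
  set u := κ * (Complex.log (1 - (z : ℂ)) + z) with hu
  have hnz : ‖(-z : ℂ)‖ = z := by rw [norm_neg, Complex.norm_real, Real.norm_of_nonneg hz0]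
  have hlog : ‖Complex.log (1 - (z : ℂ)) + z‖ ≤ z ^ 2 := by
    have := Complex.norm_log_one_add_sub_self_le (z := (-z : ℂ)) (by rw [hnz]; linarith)
    rw [hnz, sub_neg_eq_add, ← sub_eq_add_neg] at this
    refine this.trans ?_
    have h2 : (1 - z)⁻¹ ≤ 2 := by
      rw [inv_le_comm₀ (by linarith) (by norm_num)]
      linarith
    nlinarith [sq_nonneg z]
  have hun : ‖u‖ ≤ ‖κ‖ * z ^ 2 := by
    rw [hu, norm_mul]
    exact mul_le_mul_of_nonneg_left hlog (norm_nonneg _)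
  have hun' : ‖u‖ ≤ ‖κ‖ := hun.trans (by
    have : z ^ 2 ≤ 1 := by nlinarith
    nlinarith [norm_nonneg κ])
  have h1 : ‖Complex.exp u - 1‖ ≤ z ^ 2 * (‖κ‖ * Real.exp ‖κ‖) := by
    have := Complex.norm_exp_sub_sum_le_norm_mul_exp u 1
    simp only [Finset.sum_range_one, pow_zero, Nat.factorial_zero, Nat.cast_one, div_one,
      pow_one] at this
    refine this.trans ?_
    calc _ ≤ (‖κ‖ * z ^ 2) * Real.exp ‖κ‖ := by gcongr
      _ = _ := by ring
  have h2 : ‖Complex.exp w - (1 + w)‖ ≤ ‖w‖ ^ 2 * Real.exp M := by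
    have := Complex.norm_exp_sub_sum_le_norm_mul_exp w 2
    simp only [Finset.sum_range_succ, Finset.sum_range_zero, pow_zero, Nat.factorial_zero,
      Nat.factorial_one, Nat.cast_one, div_one, pow_one, zero_add] at this
    refine this.trans ?_
    gcongr
  have h3 : ‖Complex.exp (-w)‖ ≤ Real.exp M := by
    refine (Complex.norm_exp_le_exp_norm _).trans ?_
    rw [norm_neg]
    gcongr
  have h4 : ‖Complex.exp u‖ ≤ Real.exp ‖κ‖ :=
    (Complex.norm_exp_le_exp_norm _).trans (by gcongr)
  have hid : Complex.exp u * (Complex.exp (-w) * (1 + w + R)) - 1 =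
      Complex.exp u * (Complex.exp (-w) * (-(Complex.exp w - (1 + w)) + R)) +
        (Complex.exp u - 1) := by
    have : Complex.exp (-w) * Complex.exp w = 1 := by rw [← Complex.exp_add]; simp
    linear_combination (Complex.exp u) * this
  rw [hid]
  refine (norm_add_le _ _).trans (add_le_add ?_ h1)
  rw [norm_mul, norm_mul]
  have h5 : ‖-(Complex.exp w - (1 + w)) + R‖ ≤ ‖w‖ ^ 2 * Real.exp M + ‖R‖ := by
    refine (norm_add_le _ _).trans ?_
    rw [norm_neg]
    gcongr
  gcongr

/-- The size of `p^{-s-1}`. -/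
lemma rpow_bounds (p : ℕ) (hp : p.Prime) (s : ℝ) (hs : 0 ≤ s) :
    0 < (p : ℝ) ^ (-s - 1) ∧ (p : ℝ) ^ (-s - 1) ≤ 1 / p ∧ (1 : ℝ) / p ≤ 1 / 2 ∧
      (p : ℝ) ^ (s + 1) = ((p : ℝ) ^ (-s - 1))⁻¹ := by
  have hp0 : (0 : ℝ) < p := by exact_mod_cast hp.pos
  have hp2 : (2 : ℝ) ≤ p := by exact_mod_cast hp.two_le
  refine ⟨by positivity, ?_, ?_, ?_⟩
  · calc (p : ℝ) ^ (-s - 1) ≤ (p : ℝ) ^ (-1 : ℝ) :=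
        Real.rpow_le_rpow_of_exponent_le (by linarith) (by linarith)
      _ = 1 / p := by rw [Real.rpow_neg_one, one_div]
  · exact one_div_le_one_div_of_le (by norm_num) hp2
  · rw [← Real.rpow_neg hp0.le]
    congr 1
    ring

/-- Termwise bound for the local series. -/
lemma term_bound (g : ℕ → ℂ) (p : ℕ) (hp : p.Prime) (s : ℝ) (hs : 0 ≤ s) (r : ℕ) :
    ‖g (p ^ r) / (((((p : ℝ) ^ (s + 1) : ℝ)) ^ r : ℝ) : ℂ)‖ ≤ ‖g (p ^ r)‖ / (p : ℝ) ^ r := by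
  have hp0 : (0 : ℝ) < p := by exact_mod_cast hp.pos
  have hp1 : (1 : ℝ) ≤ p := by exact_mod_cast hp.one_le
  rw [norm_div, Complex.norm_real, Real.norm_of_nonneg (by positivity)]
  have : (p : ℝ) ≤ (p : ℝ) ^ (s + 1) := by
    calc (p : ℝ) = (p : ℝ) ^ (1 : ℝ) := (Real.rpow_one _).symm
      _ ≤ _ := Real.rpow_le_rpow_of_exponent_le hp1 (by linarith)
  gcongr

/-- Each Euler factor is continuous in `s ≥ 0`. -/
lemma eulerFactorS_continuousOn (g : ℕ → ℂ) (κ : ℂ) (p : ℕ) (hp : p.Prime)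
    (hsum : Summable fun r : ℕ => ‖g (p ^ r)‖ / (p : ℝ) ^ r) :
    ContinuousOn (fun s => eulerFactorS g κ s p) (Set.Ici 0) := by
  have hp0 : (0 : ℝ) < p := by exact_mod_cast hp.pos
  have hz : Continuous fun s : ℝ => (p : ℝ) ^ (-s - 1) :=
    Continuous.rpow continuous_const (by fun_prop) (fun s => Or.inl hp0.ne')
  have hz' : Continuous fun s : ℝ => (p : ℝ) ^ (s + 1) :=
    Continuous.rpow continuous_const (by fun_prop) (fun s => Or.inl hp0.ne')
  unfold eulerFactorS
  apply ContinuousOn.mul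
  · apply ContinuousOn.cpow
    · exact (continuous_const.sub (Complex.continuous_ofReal.comp hz)).continuousOn
    · exact continuousOn_const
    · intro s hs
      obtain ⟨h1, h2, h3, _⟩ := rpow_bounds p hp s hs
      left
      simp only [Complex.sub_re, Complex.one_re, Complex.ofReal_re]
      linarith
  · refine continuousOn_tsum (fun r => ?_) hsum (fun r s hs => term_bound g p hp s hs r)
    apply Continuous.continuousOn
    apply Continuous.div continuous_const
    · exact Complex.continuous_ofReal.comp (hz'.pow r)
    · intro s
      have : (0 : ℝ) < ((p : ℝ) ^ (s + 1)) ^ r := by positivity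
      exact_mod_cast ne_of_gt this

/-- The correction factor is close to one. -/
lemma correction_bound (g : ℕ → ℂ) (κ : ℂ) (hg : g 1 = 1) (p : ℕ) (hp : p.Prime) (M : ℝ)
    (hM : ‖g p‖ / (p : ℝ) ≤ M)
    (hsum : Summable fun r : ℕ => ‖g (p ^ (r + 2))‖ / (p : ℝ) ^ (r + 2)) (s : ℝ) (hs : 0 ≤ s) :
    ‖eulerFactorS g κ s p * Complex.exp (-((g p - κ) * (((p : ℝ) ^ (-s - 1) : ℝ) : ℂ))) - 1‖ ≤
      Real.exp ‖κ‖ * (Real.exp M * ((‖g p‖ / (p : ℝ)) ^ 2 * Real.exp M +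
        ∑' r : ℕ, ‖g (p ^ (r + 2))‖ / (p : ℝ) ^ (r + 2))) +
        (1 / (p : ℝ)) ^ 2 * (‖κ‖ * Real.exp ‖κ‖) := by
  obtain ⟨h1, h2, h3, h4⟩ := rpow_bounds p hp s hs
  have hp0 : (0 : ℝ) < p := by exact_mod_cast hp.pos
  set z : ℝ := (p : ℝ) ^ (-s - 1) with hz
  set T : ℕ → ℂ := fun r => g (p ^ r) / (((((p : ℝ) ^ (s + 1) : ℝ)) ^ r : ℝ) : ℂ) with hT
  have hTb : ∀ r, ‖T (r + 2)‖ ≤ ‖g (p ^ (r + 2))‖ / (p : ℝ) ^ (r + 2) := fun r =>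
    term_bound g p hp s hs (r + 2)
  have hTs2 : Summable fun r => T (r + 2) := Summable.of_norm_bounded hsum hTb
  have hTs : Summable T := (summable_nat_add_iff 2).1 hTs2
  set R : ℂ := ∑' r, T (r + 2) with hR
  have hRb : ‖R‖ ≤ ∑' r : ℕ, ‖g (p ^ (r + 2))‖ / (p : ℝ) ^ (r + 2) :=
    tsum_of_norm_bounded hsum.hasSum hTb
  have hTsum : ∑' r, T r = 1 + g p * z + R := by
    rw [← hTs.sum_add_tsum_nat_add 2]
    simp only [Finset.sum_range_succ, Finset.sum_range_zero, zero_add]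
    have e0 : T 0 = 1 := by simp [hT, hg]
    have e1 : T 1 = g p * z := by
      simp only [hT, pow_one]
      rw [h4, Complex.ofReal_inv, div_inv_eq_mul]
    rw [e0, e1]
  have hwb : ‖g p * (z : ℂ)‖ ≤ ‖g p‖ / (p : ℝ) := by
    rw [norm_mul, Complex.norm_real, Real.norm_of_nonneg h1.le, div_eq_mul_one_div]
    gcongr
  have hne : (1 - (z : ℂ)) ≠ 0 := by
    have : (1 - z : ℝ) ≠ 0 := by linarith
    exact_mod_cast this
  have hid : eulerFactorS g κ s p * Complex.exp (-((g p - κ) * (z : ℂ))) =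
      Complex.exp (κ * (Complex.log (1 - (z : ℂ)) + z)) *
        (Complex.exp (-(g p * z)) * (1 + g p * z + R)) := by
    have : eulerFactorS g κ s p = (1 - (z : ℂ)) ^ κ * ∑' r, T r := rfl
    rw [this, hTsum, Complex.cpow_def_of_ne_zero hne]
    have e : Complex.exp (Complex.log (1 - (z : ℂ)) * κ) *
        Complex.exp (-((g p - κ) * (z : ℂ))) =
        Complex.exp (κ * (Complex.log (1 - (z : ℂ)) + z)) * Complex.exp (-(g p * z)) := by
      rw [← Complex.exp_add, ← Complex.exp_add]
      congr 1
      ring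
    linear_combination (1 + g p * z + R) * e
  rw [hid]
  refine (local_estimate κ M z (g p * z) R h1.le (h2.trans h3) (hwb.trans hM)).trans ?_
  gcongr

/-- Convergence and continuity of the corrected product. -/
lemma corrected_product (g : ℕ → ℂ) (κ : ℂ) (hg : g 1 = 1) (hB : CondB g) :
    ∃ f : ℕ → ℝ → ℂ, ∃ u : ℕ → ℝ, Summable u ∧
      (∀ n, ContinuousOn (f n) (Set.Ici 0)) ∧ (∀ n, ∀ s, 0 ≤ s → ‖f n s‖ ≤ u n) ∧
      ∀ N s, ∏ p ∈ (Finset.range N).filter Nat.Prime, eulerFactorS g κ s p =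
        Complex.exp (∑ p ∈ (Finset.range N).filter Nat.Prime,
          (g p - κ) * (((p : ℝ) ^ (-s - 1) : ℝ) : ℂ)) * ∏ n ∈ Finset.range N, (1 + f n s) := by
  obtain ⟨hW, hR, hRs⟩ := condB_conseq g hB
  set M : ℝ := 1 + ∑' p : Nat.Primes, (‖g (p : ℕ)‖ / ((p : ℕ) : ℝ)) ^ 2 with hM
  have hMb : ∀ p : ℕ, p.Prime → ‖g p‖ / (p : ℝ) ≤ M := by
    intro p hp
    have := hW.le_tsum ⟨p, hp⟩ (fun q _ => by positivity)
    simp only at this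
    nlinarith [sq_nonneg (‖g p‖ / (p : ℝ) - 1)]
  set v : ℕ → ℝ := fun p => Real.exp ‖κ‖ * (Real.exp M * ((‖g p‖ / (p : ℝ)) ^ 2 * Real.exp M +
        ∑' r : ℕ, ‖g (p ^ (r + 2))‖ / (p : ℝ) ^ (r + 2))) +
        (1 / (p : ℝ)) ^ 2 * (‖κ‖ * Real.exp ‖κ‖) with hv
  have hvs : Summable (fun p : Nat.Primes => v p) := by
    have h2 : Summable fun p : Nat.Primes => (1 / ((p : ℕ) : ℝ)) ^ 2 := by
      have : Summable fun n : ℕ => (1 / (n : ℝ)) ^ 2 := by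
        simp
      exact this.comp_injective (i := fun p : Nat.Primes => (p : ℕ)) Subtype.val_injective
    exact ((((hW.mul_right _).add hRs).mul_left _).mul_left _).add (h2.mul_right _)
  refine ⟨fun n s => if n.Prime then eulerFactorS g κ s n *
      Complex.exp (-((g n - κ) * (((n : ℝ) ^ (-s - 1) : ℝ) : ℂ))) - 1 else 0,
    Set.indicator {p : ℕ | p.Prime} v, ?_, ?_, ?_, ?_⟩
  · exact summable_subtype_iff_indicator.1 hvs
  · intro n
    by_cases hn : n.Prime
    · simp only [hn, if_true]
      have hn0 : (0 : ℝ) < n := by exact_mod_cast hn.pos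
      have hz : Continuous fun s : ℝ => (n : ℝ) ^ (-s - 1) :=
        Continuous.rpow continuous_const (by fun_prop) (fun s => Or.inl hn0.ne')
      have hc := eulerFactorS_continuousOn g κ n hn
        ((summable_nat_add_iff 2).1 (hR ⟨n, hn⟩))
      refine (hc.mul (Continuous.continuousOn ?_)).sub continuousOn_const
      exact Complex.continuous_exp.comp
        (continuous_const.mul (Complex.continuous_ofReal.comp hz)).neg
    · simp only [hn, if_false]
      exact continuousOn_const
  · intro n s hs
    by_cases hn : n.Prime
    · simp only [hn, if_true]
      rw [Set.indicator_of_mem (show n ∈ {p : ℕ | p.Prime} from hn)]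
      exact correction_bound g κ hg n hn M (hMb n hn) (hR ⟨n, hn⟩) s hs
    · simp only [hn, if_false, norm_zero]
      rw [Set.indicator_of_notMem (show n ∉ {p : ℕ | p.Prime} from hn)]
  · intro N s
    have : ∏ n ∈ Finset.range N, (1 + if n.Prime then eulerFactorS g κ s n *
        Complex.exp (-((g n - κ) * (((n : ℝ) ^ (-s - 1) : ℝ) : ℂ))) - 1 else 0) =
        ∏ p ∈ (Finset.range N).filter Nat.Prime, eulerFactorS g κ s p *
          Complex.exp (-((g p - κ) * (((p : ℝ) ^ (-s - 1) : ℝ) : ℂ))) := by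
      rw [Finset.prod_filter]
      refine Finset.prod_congr rfl fun n _ => ?_
      split_ifs <;> ring
    rw [this, Complex.exp_sum, ← Finset.prod_mul_distrib]
    refine Finset.prod_congr rfl fun p _ => ?_
    rw [Complex.exp_neg]
    have := Complex.exp_ne_zero ((g p - κ) * (((p : ℝ) ^ (-s - 1) : ℝ) : ℂ))
    field_simp

theorem stmt17 (g : ℕ → ℂ) (κ : ℂ) (hg : IsMult g)
    (hA : CondA g κ) (hB : CondB g) :
    (∀ s : ℝ, 0 ≤ s → ∃ P : ℂ,
        Tendsto (fun N : ℕ => ∏ p ∈ (Finset.range N).filter Nat.Prime, eulerFactorS g κ s p)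
          atTop (nhds P)) ∧
    ∀ P : ℝ → ℂ,
      (∀ s : ℝ, 0 ≤ s →
        Tendsto (fun N : ℕ => ∏ p ∈ (Finset.range N).filter Nat.Prime, eulerFactorS g κ s p)
          atTop (nhds (P s))) →
      Tendsto P (nhdsWithin 0 (Set.Ioi 0)) (nhds (P 0)) := by
  obtain ⟨H, hHc, hH⟩ := first_order_sum g κ hA
  obtain ⟨f, u, hu, hfc, hfu, hprod⟩ := corrected_product g κ hg.1 hB
  set Q : ℝ → ℂ := fun s => ∏' n, (1 + f n s) with hQ
  have hU : ∀ a : ℝ, HasProdUniformlyOn (fun n s => 1 + f n s) Q (Set.Icc 0 a) := fun a =>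
    hu.hasProdUniformlyOn_nat_one_add isCompact_Icc
      (Filter.Eventually.of_forall fun n s hs => hfu n s hs.1)
      (fun n => (hfc n).mono fun s hs => hs.1)
  have hlim : ∀ s : ℝ, 0 ≤ s →
      Tendsto (fun N : ℕ => ∏ p ∈ (Finset.range N).filter Nat.Prime, eulerFactorS g κ s p)
        atTop (nhds (Complex.exp (H s) * Q s)) := by
    intro s hs
    simp only [hprod]
    refine Tendsto.mul ((Complex.continuous_exp.tendsto _).comp (hH s hs)) ?_
    exact ((hU s).hasProd (Set.right_mem_Icc.2 hs)).tendsto_prod_nat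
  refine ⟨fun s hs => ⟨_, hlim s hs⟩, fun P hP => ?_⟩
  have hPeq : ∀ s : ℝ, 0 ≤ s → P s = Complex.exp (H s) * Q s := fun s hs =>
    tendsto_nhds_unique (hP s hs) (hlim s hs)
  have hQc : ContinuousOn Q (Set.Icc 0 1) := by
    refine (hU 1).tendstoUniformlyOn.continuousOn (Filter.Frequently.of_forall fun S => ?_)
    apply continuousOn_finsetProd
    intro n _
    exact continuousOn_const.add ((hfc n).mono fun s hs => hs.1)
  have hcont : ContinuousOn (fun s => Complex.exp (H s) * Q s) (Set.Icc 0 1) :=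
    (Complex.continuous_exp.comp_continuousOn (hHc.mono fun s hs => hs.1)).mul hQc
  have h0 := hcont 0 (by simp)
  have hle : nhdsWithin (0 : ℝ) (Set.Ioi 0) ≤ nhdsWithin 0 (Set.Icc 0 1) := by
    rw [← nhdsWithin_Ioo_eq_nhdsGT (zero_lt_one : (0 : ℝ) < 1)]
    exact nhdsWithin_mono _ Set.Ioo_subset_Icc_self
  rw [hPeq 0 le_rfl]
  refine (h0.tendsto.mono_left hle).congr' ?_
  filter_upwards [self_mem_nhdsWithin] with s hs
  exact (hPeq s (le_of_lt hs)).symm
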